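/- arXiv:2401.13230 — 4 statements merged into one kernel-verified Lean document; each statement's English description precedes it below -/
import Mathlib

section
/- Let R be a commutative ring, g ≥ 1 an integer, let d₁,…,d_g : R → R be pairwise commuting derivations, and let c, u₁,…,u_g ∈ R be elements with d_σ(c) = 0 and d_σ(u_τ) = 0 for all σ, τ. On the polynomial ring R[X₁,…,X_g] define for each σ the additive operator D_σ by D_σ(f) = d_σ^*(f) + c·u_σ·X_σ·f − c·X_σ²·(∂f/∂X_σ), where d_σ^* applies d_σ to each coefficient of f (equivalently, D_σ(a·X^I) = d_σ(a)·X^I + c·(u_σ − I_σ)·a·X_σ·X^I for a ∈ R and a multi-index I with σ-entry I_σ). Then D_σ ∘ D_τ = D_τ ∘ D_σ for all σ, τ. -/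
open MvPolynomial

/-- Applying a map `d : R → R` to each coefficient of a multivariate polynomial. -/
noncomputable def coeffwise {R : Type*} [CommRing R] {g : ℕ} (d : R → R)
    (f : MvPolynomial (Fin g) R) : MvPolynomial (Fin g) R :=
  ∑ m ∈ f.support, monomial m (d (coeff m f))

/-- The `q`-expansion model of the partial Gauss–Manin connection:
`D_σ(f) = d_σ^*(f) + c·u_σ·X_σ·f − c·X_σ²·(∂f/∂X_σ)`. -/
noncomputable def GMop {R : Type*} [CommRing R] {g : ℕ} (d : Fin g → Derivation ℤ R R)
    (c : R) (u : Fin g → R) (σ : Fin g) (f : MvPolynomial (Fin g) R) :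
    MvPolynomial (Fin g) R :=
  coeffwise (d σ) f + C c * C (u σ) * X σ * f - C c * X σ ^ 2 * pderiv σ f

/-! The operator `D_σ` is the sum of the derivation `Δ_σ = d_σ^* - c X_σ² ∂_σ` of `R[X]` and the
multiplication by `w_σ = c u_σ X_σ`. In general `[Δ + w, Δ' + w'] = [Δ, Δ'] + Δ w' - Δ' w`. For
`σ ≠ τ` the derivation `[Δ_σ, Δ_τ]` kills the constants and the variables, hence is zero, and
`Δ_σ w_τ = 0 = Δ_τ w_σ`. -/

section

variable {k A : Type*} [CommRing k] [CommRing A] [Algebra k A]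

theorem commute_derivation_add_mulLeft {D E : Derivation k A A} {a b : A}
    (hDE : ⁅D, E⁆ = 0) (hab : D b = E a) :
    Commute ((D : Module.End k A) + LinearMap.mulLeft k a)
      ((E : Module.End k A) + LinearMap.mulLeft k b) := by
  ext f
  have hDEf : D (E f) - E (D f) = 0 := congr($hDE f)
  simp only [Module.End.mul_apply, LinearMap.add_apply, LinearMap.mulLeft_apply,
    Derivation.coeFn_coe, map_add, Derivation.leibniz, smul_eq_mul]
  linear_combination hDEf + f * hab

end

section

variable {k R ι : Type*} [CommRing k] [CommRing R] [Algebra k R]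

theorem mvPolynomial_derivation_ext_C_X
    {D E : Derivation k (MvPolynomial ι R) (MvPolynomial ι R)}
    (hC : ∀ a, D (C a) = E (C a)) (hX : ∀ i, D (X i) = E (X i)) : D = E := by
  ext1 p
  induction p using MvPolynomial.induction_on with
  | C a => exact hC a
  | add p q hp hq => rw [map_add, map_add, hp, hq]
  | mul_X p i hp => rw [Derivation.leibniz, Derivation.leibniz, hp, hX]

/-- The extension `d^*` of a derivation `d` of `R` to `R[X_i : i ∈ ι]`, acting on coefficients. -/
noncomputable def coeffDerivation (d : Derivation k R R) :
    Derivation k (MvPolynomial ι R) (MvPolynomial ι R) :=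
  Derivation.mk'
    { toFun := AddMonoidAlgebra.map (d : R →+ R)
      map_add' := fun p q => by ext m; simp [coeff]
      map_smul' := fun r p => by ext m; simp [coeff] }
    fun p q => by
      classical
      ext m
      have hcoeff (p : MvPolynomial ι R) (m : ι →₀ ℕ) :
          coeff m (AddMonoidAlgebra.map (d : R →+ R) p) = d (coeff m p) := rfl
      simp only [smul_eq_mul, mul_comm q, LinearMap.coe_mk, AddHom.coe_mk, hcoeff, coeff_add,
        coeff_mul, map_sum, Derivation.leibniz, Finset.sum_add_distrib, mul_comm (d _)]

@[simp]
theorem coeff_coeffDerivation (d : Derivation k R R) (p : MvPolynomial ι R) (m : ι →₀ ℕ) :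
    coeff m (coeffDerivation d p) = d (coeff m p) :=
  rfl

@[simp]
theorem coeffDerivation_C (d : Derivation k R R) (a : R) :
    coeffDerivation d (C a : MvPolynomial ι R) = C (d a) := by
  classical
  ext m
  simp only [coeff_coeffDerivation, coeff_C, apply_ite d, map_zero]

@[simp]
theorem coeffDerivation_X (d : Derivation k R R) (i : ι) :
    coeffDerivation d (X i : MvPolynomial ι R) = 0 := by
  classical
  ext m
  simp only [coeff_coeffDerivation, coeff_X, apply_ite d, map_zero, Derivation.map_one_eq_zero,
    ite_self, coeff_zero]

/-- The derivation `d^* - c X_i² ∂_i`, the first-order part of the partial Gauss–Manin connection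
in the direction `i`. -/
noncomputable def gaussManinDerivation (d : Derivation k R R) (c : R) (i : ι) :
    Derivation k (MvPolynomial ι R) (MvPolynomial ι R) :=
  coeffDerivation d - (C c * X i ^ 2 : MvPolynomial ι R) • (pderiv i).restrictScalars k

theorem gaussManinDerivation_apply (d : Derivation k R R) (c : R) (i : ι) (f : MvPolynomial ι R) :
    gaussManinDerivation d c i f = coeffDerivation d f - C c * X i ^ 2 * pderiv i f :=
  rfl

@[simp]
theorem gaussManinDerivation_C (d : Derivation k R R) (c : R) (i : ι) (a : R) :
    gaussManinDerivation d c i (C a) = C (d a) := by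
  simp [gaussManinDerivation_apply]

theorem gaussManinDerivation_X_self (d : Derivation k R R) (c : R) (i : ι) :
    gaussManinDerivation d c i (X i) = -(C c * X i ^ 2) := by
  simp [gaussManinDerivation_apply]

theorem gaussManinDerivation_X_of_ne (d : Derivation k R R) (c : R) {i j : ι} (hij : i ≠ j) :
    gaussManinDerivation d c i (X j) = 0 := by
  simp [gaussManinDerivation_apply, pderiv_X_of_ne hij.symm]

theorem gaussManinDerivation_C_mul_X_pow_of_ne {d : Derivation k R R} (c : R) {a : R}
    (ha : d a = 0) {i j : ι} (hij : i ≠ j) (n : ℕ) :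
    gaussManinDerivation d c i (C a * X j ^ n) = 0 := by
  simp [Derivation.leibniz, Derivation.leibniz_pow, gaussManinDerivation_X_of_ne d c hij, ha]

theorem gaussManinDerivation_gaussManinDerivation_X_of_ne {d e : Derivation k R R}
    {c c' : R} (hdc' : d c' = 0) {i j : ι} (hij : i ≠ j) (l : ι) :
    gaussManinDerivation d c i (gaussManinDerivation e c' j (X l)) = 0 := by
  obtain rfl | hjl := eq_or_ne j l
  · rw [gaussManinDerivation_X_self, map_neg,
      gaussManinDerivation_C_mul_X_pow_of_ne c hdc' hij, neg_zero]
  · rw [gaussManinDerivation_X_of_ne e c' hjl, map_zero]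

theorem lie_gaussManinDerivation_eq_zero {d e : Derivation k R R} (hde : ⁅d, e⁆ = 0) {c c' : R}
    (hdc' : d c' = 0) (hec : e c = 0) {i j : ι} (hij : i ≠ j) :
    ⁅gaussManinDerivation d c i, gaussManinDerivation e c' j⁆ = 0 := by
  refine mvPolynomial_derivation_ext_C_X (fun a => ?_) (fun l => ?_)
  · have hdea : d (e a) - e (d a) = 0 := congr($hde a)
    simp only [Derivation.commutator_apply, gaussManinDerivation_C, ← C_sub, hdea, C_0,
      Derivation.zero_apply]
  · rw [Derivation.commutator_apply,
      gaussManinDerivation_gaussManinDerivation_X_of_ne hdc' hij,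
      gaussManinDerivation_gaussManinDerivation_X_of_ne hec hij.symm, sub_zero,
      Derivation.zero_apply]

/-- The partial Gauss–Manin connection `d^* + c u X_i - c X_i² ∂_i` in the direction `i`, as a
`k`-linear operator, for an arbitrary set `ι` of directions. -/
noncomputable def gaussManin (d : Derivation k R R) (c u : R) (i : ι) :
    Module.End k (MvPolynomial ι R) :=
  (gaussManinDerivation d c i : Module.End k (MvPolynomial ι R)) +
    LinearMap.mulLeft k (C (c * u) * X i)

theorem commute_gaussManin_of_ne {d e : Derivation k R R} (hde : ⁅d, e⁆ = 0) {c c' u v : R}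
    (hdc' : d c' = 0) (hdv : d v = 0) (hec : e c = 0) (heu : e u = 0) {i j : ι} (hij : i ≠ j) :
    Commute (gaussManin d c u i) (gaussManin e c' v j) := by
  have hdw : gaussManinDerivation d c i (C (c' * v) * X j) = 0 := by
    simpa using gaussManinDerivation_C_mul_X_pow_of_ne c (a := c' * v)
      (by simp [hdc', hdv]) hij 1
  have hew : gaussManinDerivation e c' j (C (c * u) * X i) = 0 := by
    simpa using gaussManinDerivation_C_mul_X_pow_of_ne c' (a := c * u)
      (by simp [hec, heu]) hij.symm 1
  exact commute_derivation_add_mulLeft (lie_gaussManinDerivation_eq_zero hde hdc' hec hij)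
    (hdw.trans hew.symm)

theorem stmt_1_general (d : ι → Derivation k R R)
    (hcomm : Pairwise fun σ τ => ⁅d σ, d τ⁆ = 0)
    (c u : ι → R)
    (hc : Pairwise fun σ τ => d σ (c τ) = 0) (hu : Pairwise fun σ τ => d σ (u τ) = 0)
    (σ τ : ι) :
    Commute (gaussManin (d σ) (c σ) (u σ) σ) (gaussManin (d τ) (c τ) (u τ) τ) := by
  obtain rfl | hστ := eq_or_ne σ τ
  · exact Commute.refl _
  · exact commute_gaussManin_of_ne (hcomm hστ) (hc hστ) (hu hστ) (hc hστ.symm) (hu hστ.symm) hστ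

end

theorem coeffwise_eq_coeffDerivation {R : Type*} [CommRing R] {g : ℕ} (d : Derivation ℤ R R)
    (f : MvPolynomial (Fin g) R) : coeffwise d f = coeffDerivation d f := by
  ext m
  simp only [coeffwise, coeff_sum, coeff_monomial, Finset.sum_ite_eq', coeff_coeffDerivation]
  split_ifs with hm
  · rfl
  · rw [notMem_support_iff.mp hm, map_zero]

theorem GMop_eq_gaussManin {R : Type*} [CommRing R] {g : ℕ} (d : Fin g → Derivation ℤ R R)
    (c : R) (u : Fin g → R) (σ : Fin g) (f : MvPolynomial (Fin g) R) :
    GMop d c u σ f = gaussManin (d σ) c (u σ) σ f := by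
  simp only [GMop, gaussManin, coeffwise_eq_coeffDerivation, LinearMap.add_apply,
    Derivation.coeFn_coe, gaussManinDerivation_apply, LinearMap.mulLeft_apply, C_mul]
  ring

/-- The partial Gauss–Manin connections commute: if the derivations `d_σ` pairwise
commute and kill the constants `c` and `u_τ`, then `D_σ ∘ D_τ = D_τ ∘ D_σ`. -/
theorem stmt_1 {R : Type*} [CommRing R] (g : ℕ) (hg : 1 ≤ g)
    (d : Fin g → Derivation ℤ R R)
    (hcomm : ∀ σ τ : Fin g, ∀ x : R, d σ (d τ x) = d τ (d σ x))
    (c : R) (u : Fin g → R)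
    (hc : ∀ σ, d σ c = 0) (hu : ∀ σ τ, d σ (u τ) = 0)
    (σ τ : Fin g) (f : MvPolynomial (Fin g) R) :
    GMop d c u σ (GMop d c u τ f) = GMop d c u τ (GMop d c u σ f) := by
  have hlie : Pairwise fun σ τ => ⁅d σ, d τ⁆ = 0 := fun σ τ _ =>
    Derivation.ext fun x => sub_eq_zero.mpr (hcomm σ τ x)
  have hcommute := stmt_1_general d hlie (fun _ => c) u (fun σ _ _ => hc σ)
    (fun σ τ _ => hu σ τ) σ τ
  simpa only [GMop_eq_gaussManin, Module.End.mul_apply] using congr($hcommute.eq f)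
end

section
/- Let R be a commutative ring, d : R → R a derivation, and c, u ∈ R elements with d(c) = 0 and d(u) = 0. For each integer m ≥ 0 define the additive operator D_m on the polynomial ring R[X] by D_m(f) = d^*(f) + c·(u + 2m)·X·f − c·X²·f′, where d^* applies d to each coefficient of f (equivalently, D_m(a·X^s) = d(a)·X^s + c·(u + 2m − s)·a·X^{s+1}). Then for every integer N ≥ 1, every a ∈ R and every i ≥ 0: (D_{N−1} ∘ ⋯ ∘ D_1 ∘ D_0)(a·X^i) = Σ_{j=0}^{N} c^j · binom(N, j) · (∏_{l=0}^{j−1} (u − i + N − 1 − l)) · d^{N−j}(a) · X^{i+j}, where the integers i, N−1−l are interpreted in R via the canonical ring map from ℤ. -/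
open Polynomial

/-- The `q`-expansion model of the partial Gauss–Manin connection from weight
`k + 2mσ` to weight `k + 2(m+1)σ`:
`D_m(f) = d^*(f) + c·(u + 2m)·X·f − c·X²·f′`, where `d^*` applies the derivation
`d` to each coefficient. -/
noncomputable def Dop {R : Type*} [CommRing R] (d : Derivation ℤ R R) (c u : R) (m : ℕ)
    (f : R[X]) : R[X] :=
  (f.sum fun n a => C (d a) * X ^ n) + C (c * (u + 2 * (m : R))) * X * f
    - C c * X ^ 2 * derivative f

/-- The iterated connection `D_{N−1} ∘ ⋯ ∘ D_1 ∘ D_0`. -/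
noncomputable def DopIter {R : Type*} [CommRing R] (d : Derivation ℤ R R) (c u : R) :
    ℕ → R[X] → R[X]
  | 0 => id
  | (N + 1) => Dop d c u N ∘ DopIter d c u N

/-!
On a monomial, `D_m (b X^s) = d(b) X^s + c (u + 2m − s) b X^(s+1)`. Since `c` and `u` are constants
of `d`, so are the coefficients `A(N, j)` of the asserted expansion, and applying `D_N` to it yields
the recursion `A(N+1, j+1) = A(N, j+1) + c (w + 2N − j) A(N, j)` with `w = u − i`. The closed form
satisfies it by Pascal's rule and `(j+1) binom(N, j+1) = (N−j) binom(N, j)`, because the product for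
`(N+1, j+1)` is `w + N` times the one for `(N, j)`.
-/

section Constants

variable {K A M : Type*} [CommSemiring K] [CommSemiring A] [Algebra K A]
  [AddCommMonoid M] [Module K M] [Module A M]

/-- The subalgebra of constants of a derivation, that is, its kernel. -/
def derivationConstants (d : Derivation K A M) : Subalgebra K A where
  carrier := {x | d x = 0}
  add_mem' {x y} (hx : d x = 0) (hy : d y = 0) := by simp [hx, hy]
  mul_mem' {x y} (hx : d x = 0) (hy : d y = 0) := by simp [hx, hy]
  algebraMap_mem' := d.map_algebraMap

theorem map_mul_of_mem_derivationConstants {d : Derivation K A M} {x : A}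
    (hx : x ∈ derivationConstants d) (y : A) : d (x * y) = x • d y := by
  have hx : d x = 0 := hx
  rw [d.leibniz, hx, smul_zero, add_zero]

end Constants

section Coefficients

theorem cast_choose_succ_right_mul (R : Type*) [Ring R] (N j : ℕ) :
    (N.choose (j + 1) : R) * (j + 1) = N.choose j * (N - j) := by
  rcases le_or_gt j N with hj | hj
  · rw [← Nat.cast_sub hj]
    exact_mod_cast congrArg (Nat.cast : ℕ → R) (Nat.choose_succ_right_eq N j)
  · simp [Nat.choose_eq_zero_of_lt hj, Nat.choose_eq_zero_of_lt (hj.trans j.lt_succ_self)]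

variable {R : Type*} [CommRing R]

/-- The coefficient `c^j · a_{N,k,i,j}` of the `N`-fold iterated connection, as a function of
`w = u − i`: only this difference of the analytic exponent `u` of the weight and the power `i`
of the initial monomial matters. -/
def gaussManinCoeff (c w : R) (N j : ℕ) : R :=
  c ^ j * (N.choose j : R) * ∏ l ∈ Finset.range j, (w + (N : R) - 1 - (l : R))

@[simp]
theorem gaussManinCoeff_zero_right (c w : R) (N : ℕ) : gaussManinCoeff c w N 0 = 1 := by
  simp [gaussManinCoeff]

theorem gaussManinCoeff_eq_zero_of_lt (c w : R) {N j : ℕ} (h : N < j) :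
    gaussManinCoeff c w N j = 0 := by
  simp [gaussManinCoeff, Nat.choose_eq_zero_of_lt h]

theorem gaussManinCoeff_succ_succ (c w : R) (N j : ℕ) :
    gaussManinCoeff c w (N + 1) (j + 1) =
      gaussManinCoeff c w N (j + 1) + c * (w + 2 * N - j) * gaussManinCoeff c w N j := by
  have shift (l : ℕ) : w + ((N + 1 : ℕ) : R) - 1 - ((l + 1 : ℕ) : R) = w + N - 1 - l := by
    push_cast
    ring
  simp only [gaussManinCoeff]
  rw [Finset.prod_range_succ', Finset.prod_range_succ _ j, Nat.choose_succ_succ']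
  simp only [shift]
  push_cast
  linear_combination
    c ^ (j + 1) * (∏ l ∈ Finset.range j, (w + (N : R) - 1 - (l : R))) *
      cast_choose_succ_right_mul R N j

theorem gaussManinCoeff_mem {S : Type*} [SetLike S R] [SubringClass S R] {s : S} {c w : R}
    (hc : c ∈ s) (hw : w ∈ s) (N j : ℕ) : gaussManinCoeff c w N j ∈ s :=
  mul_mem (mul_mem (pow_mem hc j) (natCast_mem _ _)) <| prod_mem fun l _ =>
    sub_mem (sub_mem (add_mem hw (natCast_mem _ N)) (one_mem _)) (natCast_mem _ l)

theorem map_gaussManinCoeff_mul_iterate {K : Type*} [CommRing K] [Algebra K R]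
    {d : Derivation K R R} {c w : R} (hc : c ∈ derivationConstants d)
    (hw : w ∈ derivationConstants d) (N j : ℕ) (a : R) :
    d (gaussManinCoeff c w N j * d^[N - j] a) = gaussManinCoeff c w N j * d^[N + 1 - j] a := by
  rcases le_or_gt j N with hj | hj
  · rw [map_mul_of_mem_derivationConstants (gaussManinCoeff_mem hc hw N j), smul_eq_mul,
      Nat.succ_sub hj, Function.iterate_succ_apply']
  · simp only [gaussManinCoeff_eq_zero_of_lt c w hj, zero_mul, map_zero]

end Coefficients

section Connection

variable {R : Type*} [CommRing R] (d : Derivation ℤ R R) (c u : R) (m : ℕ)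

theorem Dop_add (f g : R[X]) : Dop d c u m (f + g) = Dop d c u m f + Dop d c u m g := by
  unfold Dop
  rw [sum_add_index f g _ (by simp) (by simp [add_mul]), derivative_add]
  ring

theorem Dop_sum {ι : Type*} (s : Finset ι) (f : ι → R[X]) :
    Dop d c u m (∑ j ∈ s, f j) = ∑ j ∈ s, Dop d c u m (f j) :=
  map_sum (AddMonoidHom.mk' (Dop d c u m) (Dop_add d c u m)) f s

theorem Dop_C_mul_X_pow (b : R) (s : ℕ) :
    Dop d c u m (C b * X ^ s) =
      C (d b) * X ^ s + C (c * (u + 2 * m - s) * b) * X ^ (s + 1) := by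
  have X_sq_mul_derivative : X ^ 2 * derivative (C b * X ^ s) = C (s * b) * X ^ (s + 1) := by
    rw [derivative_C_mul_X_pow]
    cases s with
    | zero => simp
    | succ s =>
      rw [Nat.add_sub_cancel, mul_comm b]
      ring
  have coefficientwise : ((C b * X ^ s).sum fun n a => C (d a) * X ^ n) = C (d b) * X ^ s := by
    rw [C_mul_X_pow_eq_monomial, sum_monomial_index _ _ (by simp)]
  rw [Dop, coefficientwise, mul_assoc (C c), X_sq_mul_derivative]
  simp only [C_mul, C_add, C_sub]
  ring

theorem Dop_sum_C_mul_X_pow (b : ℕ → R) (i : ℕ) {n : ℕ} (hb : b n = 0) :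
    Dop d c u m (∑ j ∈ Finset.range n, C (b j) * X ^ (i + j)) =
      C (d (b 0)) * X ^ i +
        ∑ j ∈ Finset.range n,
          C (d (b (j + 1)) + c * (u + 2 * m - (i + j : ℕ)) * b j) * X ^ (i + (j + 1)) := by
  have extend : ∑ j ∈ Finset.range n, C (d (b j)) * X ^ (i + j) =
      ∑ j ∈ Finset.range (n + 1), C (d (b j)) * X ^ (i + j) := by
    simp [Finset.sum_range_succ, hb]
  simp only [Dop_sum, Dop_C_mul_X_pow, Finset.sum_add_distrib, C_add, add_mul]
  rw [extend, Finset.sum_range_succ', add_zero, add_comm (C (d (b 0)) * X ^ i), add_right_comm]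
  simp only [add_assoc]

end Connection

/-- Explicit iteration formula for the partial Gauss–Manin connection on
`q`-expansions:
`(D_{N−1} ∘ ⋯ ∘ D_0)(a·X^i) = Σ_{j=0}^{N} c^j·binom(N,j)·(∏_{l=0}^{j−1}(u−i+N−1−l))·d^{N−j}(a)·X^{i+j}`. -/
theorem stmt_2 {R : Type*} [CommRing R] (d : Derivation ℤ R R) (c u : R)
    (hc : d c = 0) (hu : d u = 0) (N : ℕ) (hN : 1 ≤ N) (a : R) (i : ℕ) :
    DopIter d c u N (C a * X ^ i) =
      ∑ j ∈ Finset.range (N + 1),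
        C (c ^ j * (N.choose j : R) *
            (∏ l ∈ Finset.range j, (u - (i : R) + (N : R) - 1 - (l : R))) *
            ((fun x => d x)^[N - j] a)) * X ^ (i + j) := by
  change DopIter d c u N (C a * X ^ i) = ∑ j ∈ Finset.range (N + 1),
    C (gaussManinCoeff c (u - i) N j * d^[N - j] a) * X ^ (i + j)
  have hw : u - (i : R) ∈ derivationConstants d := sub_mem hu (natCast_mem _ i)
  clear hN
  induction N with
  | zero => simp [DopIter]
  | succ N ih =>
    rw [DopIter, Function.comp_apply, ih,
      Dop_sum_C_mul_X_pow d c u N (fun j => gaussManinCoeff c (u - i) N j * d^[N - j] a) i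
        (by simp [gaussManinCoeff_eq_zero_of_lt]),
      Finset.sum_range_succ' _ (N + 1), add_comm]
    congr 1
    · refine Finset.sum_congr rfl fun j _ => ?_
      rw [map_gaussManinCoeff_mul_iterate hc hw, gaussManinCoeff_succ_succ, Nat.add_sub_add_right]
      congr 2
      push_cast
      ring
    · rw [map_gaussManinCoeff_mul_iterate hc hw, add_zero]
      simp only [gaussManinCoeff_zero_right]
end

section
/- Let p ≥ 3 be a prime, let M be a complete normed ℚ_p-vector space whose norm is nonarchimedean (‖x+y‖ ≤ max(‖x‖,‖y‖) for all x, y), and let L : M → M and T : M → M be ℚ_p-linear maps such that ‖T(x)‖ ≤ ‖x‖ for all x ∈ M and T ∘ L = L ∘ T. Let f ≥ 1 be an integer and q = p^f. Suppose g ∈ M and C ≥ 0 satisfy ‖(L − id)^N(g)‖ ≤ C·p^{−N} for all N ≥ 0. Then: (i) the series Σ_{j≥1} ((−1)^{j−1}/j)·(L − id)^j(g) converges in M; (ii) the sequence B_m := Σ_{i=0}^{m} (1/(i!·(q−1)^i)) · T^i ( Σ_{(j₁,…,jᵢ)} (∏_{a=1}^{i} ((−1)^{j_a−1}/j_a)) ·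 (L − id)^{j₁+⋯+jᵢ}(g) ) converges in M as m → ∞, where the inner sum runs over all i-tuples of positive integers with j₁ + ⋯ + jᵢ ≤ m, and the rational scalars act via the ℚ_p-vector space structure. -/
open Filter

/-!
Let `r = p ^ (1 / (p - 1))` and `x n = (L - 1) ^ n g`. Legendre's formula gives `‖1 / i!‖ ≤ r ^ i`
and `‖1 / j‖ ≤ r ^ (j - 1)`. Hence a term of `B_m` of order `i` indexed by `(j₁, …, jᵢ)` with
`n = j₁ + ⋯ + jᵢ` has norm at most `r ^ i * r ^ (n - i) * ‖x n‖ = r ^ n * ‖x n‖`. Grouping the terms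
by the total degree `n` turns `B_m` into the partial sums of a series whose terms tend to `0`, which
is all that convergence requires in a complete nonarchimedean group. The decay
`‖x n‖ ≤ C * p ^ (-n)` suffices because `r < p` as soon as `3 ≤ p`.
-/

section ExpRadius

variable {p : ℕ}

/-- The inverse `p ^ (1 / (p - 1))` of the radius of convergence of the `p`-adic exponential. -/
noncomputable def expRadiusInv (p : ℕ) : ℝ :=
  (p : ℝ) ^ (1 / ((p : ℝ) - 1))

lemma expRadiusInv_pow_sub_one (hp : 1 < p) : expRadiusInv p ^ (p - 1) = p := by
  have hp' : (p : ℝ) - 1 ≠ 0 := (sub_pos.mpr (Nat.one_lt_cast.mpr hp)).ne'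
  rw [expRadiusInv, ← Real.rpow_mul_natCast p.cast_nonneg, Nat.cast_sub hp.le, Nat.cast_one,
    one_div_mul_cancel hp', Real.rpow_one]

lemma one_le_expRadiusInv (hp : 1 ≤ p) : 1 ≤ expRadiusInv p := by
  have hp' : (1 : ℝ) ≤ p := Nat.one_le_cast.mpr hp
  exact Real.one_le_rpow hp' (one_div_nonneg.mpr (sub_nonneg.mpr hp'))

lemma expRadiusInv_lt_self (hp : 3 ≤ p) : expRadiusInv p < p := by
  have hp' : (3 : ℝ) ≤ p := mod_cast hp
  refine Real.rpow_lt_self_of_one_lt (by linarith) ?_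
  rw [div_lt_one] <;> linarith

lemma tendsto_expRadiusInv_pow_mul_norm {M : Type*} [SeminormedAddCommGroup M] (hp : 3 ≤ p)
    {x : ℕ → M} {C : ℝ} (hx : ∀ n : ℕ, ‖x n‖ ≤ C * (p : ℝ) ^ (-(n : ℤ))) :
    Tendsto (fun n ↦ expRadiusInv p ^ n * ‖x n‖) atTop (nhds 0) := by
  have hr : 0 ≤ expRadiusInv p := zero_le_one.trans (one_le_expRadiusInv (by lia))
  have hp' : (0 : ℝ) < p := by positivity
  have h_geom : Tendsto (fun n : ℕ ↦ C * (expRadiusInv p / p) ^ n) atTop (nhds 0) := by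
    simpa only [mul_zero] using (tendsto_pow_atTop_nhds_zero_of_lt_one (by positivity)
      ((div_lt_one hp').mpr (expRadiusInv_lt_self hp))).const_mul C
  refine squeeze_zero (fun n ↦ by positivity) (fun n ↦ ?_) h_geom
  calc expRadiusInv p ^ n * ‖x n‖
      ≤ expRadiusInv p ^ n * (C * (p : ℝ) ^ (-(n : ℤ))) := by gcongr; exact hx n
    _ = C * (expRadiusInv p / p) ^ n := by rw [zpow_neg, zpow_natCast, div_pow]; ring

end ExpRadius

section PadicCoefficients

variable {p : ℕ} [Fact p.Prime]

lemma norm_prime_pow_sub_one {f : ℕ} (hf : f ≠ 0) : ‖(p : ℚ_[p]) ^ f - 1‖ = 1 := by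
  have h_lt : ‖(p : ℚ_[p]) ^ f‖ < ‖(-1 : ℚ_[p])‖ := by
    rw [norm_pow, norm_neg, norm_one]
    exact pow_lt_one₀ (norm_nonneg _) Padic.norm_p_lt_one hf
  rw [sub_eq_add_neg, IsUltrametricDist.norm_add_eq_max_of_norm_ne_norm h_lt.ne,
    max_eq_right h_lt.le, norm_neg, norm_one]

lemma norm_inv_factorial_le (n : ℕ) :
    ‖((n.factorial : ℚ_[p]))⁻¹‖ ≤ expRadiusInv p ^ (n - 1) := by
  have hp : 1 < p := (Fact.out : p.Prime).one_lt
  have h_legendre : (p - 1) * padicValNat p n.factorial ≤ n - 1 := by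
    rcases eq_or_ne n 0 with rfl | hn
    · simp
    · exact Nat.le_sub_one_of_lt (sub_one_mul_padicValNat_factorial_lt_of_ne_zero p hn)
  calc ‖((n.factorial : ℚ_[p]))⁻¹‖ = (p : ℝ) ^ padicValNat p n.factorial := by
        rw [norm_inv, Padic.norm_eq_zpow_neg_valuation (mod_cast n.factorial_ne_zero),
          Padic.valuation_natCast, zpow_neg, inv_inv, zpow_natCast]
    _ = expRadiusInv p ^ ((p - 1) * padicValNat p n.factorial) := by
        rw [pow_mul, expRadiusInv_pow_sub_one hp]
    _ ≤ expRadiusInv p ^ (n - 1) := pow_le_pow_right₀ (one_le_expRadiusInv hp.le) h_legendre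

lemma norm_inv_natCast_le {n : ℕ} (hn : n ≠ 0) :
    ‖(n : ℚ_[p])⁻¹‖ ≤ expRadiusInv p ^ (n - 1) := by
  refine le_trans ?_ (norm_inv_factorial_le n)
  have h_eq : (n : ℚ_[p])⁻¹ = ((n - 1).factorial : ℚ_[p]) * (n.factorial : ℚ_[p])⁻¹ := by
    have h_ne : ((n - 1).factorial : ℚ_[p]) ≠ 0 := mod_cast (n - 1).factorial_ne_zero
    rw [← Nat.mul_factorial_pred hn, Nat.cast_mul, mul_inv_rev, mul_inv_cancel_left₀ h_ne]
  rw [h_eq, norm_mul]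
  exact mul_le_of_le_one_left (norm_nonneg _) (IsUltrametricDist.norm_natCast_le_one _ _)

lemma expRadiusInv_mul_norm_log_coeff_le {j : ℕ} (hj : j ≠ 0) :
    expRadiusInv p * ‖(-1 : ℚ_[p]) ^ (j - 1) / (j : ℚ_[p])‖ ≤ expRadiusInv p ^ j := by
  have hr : 0 ≤ expRadiusInv p :=
    zero_le_one.trans (one_le_expRadiusInv (Fact.out : p.Prime).one_le)
  calc expRadiusInv p * ‖(-1 : ℚ_[p]) ^ (j - 1) / (j : ℚ_[p])‖
      = expRadiusInv p * ‖(j : ℚ_[p])⁻¹‖ := by simp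
    _ ≤ expRadiusInv p * expRadiusInv p ^ (j - 1) := by gcongr; exact norm_inv_natCast_le hj
    _ = expRadiusInv p ^ j := mul_pow_sub_one hj _

lemma norm_exp_coeff_le {u : ℚ_[p]} (hu : 1 ≤ ‖u‖) (i : ℕ) :
    ‖1 / ((i.factorial : ℚ_[p]) * u ^ i)‖ ≤ expRadiusInv p ^ i := by
  rw [one_div, mul_inv, norm_mul, norm_inv (u ^ i), norm_pow]
  calc ‖((i.factorial : ℚ_[p]))⁻¹‖ * (‖u‖ ^ i)⁻¹ ≤ ‖((i.factorial : ℚ_[p]))⁻¹‖ :=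
        mul_le_of_le_one_right (norm_nonneg _) (inv_le_one_of_one_le₀ (one_le_pow₀ hu))
    _ ≤ expRadiusInv p ^ (i - 1) := norm_inv_factorial_le i
    _ ≤ expRadiusInv p ^ i :=
        pow_le_pow_right₀ (one_le_expRadiusInv (Fact.out : p.Prime).one_le) (Nat.sub_le i 1)

end PadicCoefficients

section Composition

variable {R M : Type*} [CommSemiring R] [AddCommMonoid M] [Module R M]

/-- The coefficient of `X ^ n` in `(∑ j ≥ 1, b j * X ^ j) ^ i`, expanded as a sum over the ordered
`i`-tuples of positive integers with sum `n`. -/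
def powCoeff (b : ℕ → R) (i n : ℕ) : R :=
  ∑ J ∈ (Fintype.piFinset fun _ : Fin i ↦ Finset.Icc 1 n) with ∑ a, J a = n, ∏ a, b (J a)

lemma powCoeff_eq_zero_of_lt (b : ℕ → R) {i n : ℕ} (h : n < i) :
    powCoeff b i n = 0 := by
  refine Finset.sum_eq_zero fun J hJ ↦ absurd h (not_lt.mpr ?_)
  rw [Finset.mem_filter, Fintype.mem_piFinset] at hJ
  calc i = ∑ _a : Fin i, 1 := by simp
    _ ≤ ∑ a, J a := Finset.sum_le_sum fun a _ ↦ (Finset.mem_Icc.mp (hJ.1 a)).1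
    _ = n := hJ.2

lemma filter_sum_eq_filter_sum_le {i m n : ℕ} (hnm : n ≤ m) :
    {J ∈ {J ∈ Fintype.piFinset fun _ : Fin i ↦ Finset.Icc 1 m | ∑ a, J a ≤ m} | ∑ a, J a = n} =
      {J ∈ Fintype.piFinset fun _ : Fin i ↦ Finset.Icc 1 n | ∑ a, J a = n} := by
  ext J
  have h_le (a : Fin i) : J a ≤ ∑ a, J a :=
    Finset.single_le_sum (fun _ _ ↦ Nat.zero_le _) (Finset.mem_univ a)
  simp only [Finset.mem_filter, Fintype.mem_piFinset, Finset.mem_Icc]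
  grind

lemma sum_prod_smul_eq_sum_powCoeff_smul (b : ℕ → R) (x : ℕ → M) (i m : ℕ) :
    ∑ J ∈ (Fintype.piFinset fun _ : Fin i ↦ Finset.Icc 1 m) with ∑ a, J a ≤ m,
        (∏ a, b (J a)) • x (∑ a, J a) =
      ∑ n ∈ Finset.range (m + 1), powCoeff b i n • x n := by
  rw [← Finset.sum_fiberwise_of_maps_to (g := fun J : Fin i → ℕ ↦ ∑ a, J a)
    (t := Finset.range (m + 1)) fun J hJ ↦ by
      simpa only [Finset.mem_range, Order.lt_add_one_iff] using (Finset.mem_filter.mp hJ).2]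
  refine Finset.sum_congr rfl fun n hn ↦ ?_
  rw [filter_sum_eq_filter_sum_le (Finset.mem_range_succ_iff.mp hn), powCoeff, Finset.sum_smul]
  exact Finset.sum_congr rfl fun J hJ ↦ by rw [(Finset.mem_filter.mp hJ).2]

/-- The part of degree `n` of `e(T b(X))`, for power series `e = ∑ i, e i * X ^ i` and
`b = ∑ j ≥ 1, b j * X ^ j`, with the monomial `X ^ n` replaced by the vector `x n`. -/
def compTerm (e b : ℕ → R) (T : Module.End R M) (x : ℕ → M) (n : ℕ) : M :=
  ∑ i ∈ Finset.range (n + 1), (e i * powCoeff b i n) • (T ^ i) (x n)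

lemma sum_smul_pow_apply_eq_sum_compTerm (e b : ℕ → R) (T : Module.End R M) (x : ℕ → M) (m : ℕ) :
    ∑ i ∈ Finset.range (m + 1), e i • (T ^ i)
        (∑ J ∈ (Fintype.piFinset fun _ : Fin i ↦ Finset.Icc 1 m) with ∑ a, J a ≤ m,
          (∏ a, b (J a)) • x (∑ a, J a)) =
      ∑ n ∈ Finset.range (m + 1), compTerm e b T x n := by
  simp only [sum_prod_smul_eq_sum_powCoeff_smul, map_sum, map_smul, Finset.smul_sum, smul_smul]
  rw [Finset.sum_comm]
  refine Finset.sum_congr rfl fun n hn ↦ (Finset.sum_subset ?_ fun i _ hi ↦ ?_).symm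
  · exact Finset.range_subset_range.mpr (Finset.mem_range.mp hn)
  · rw [powCoeff_eq_zero_of_lt b (by simpa using hi), mul_zero, zero_smul]

end Composition

section Convergence

lemma norm_pow_apply_le {R E : Type*} [Semiring R] [SeminormedAddCommGroup E] [Module R E]
    {T : Module.End R E} (hT : ∀ x, ‖T x‖ ≤ ‖x‖) (i : ℕ) (x : E) : ‖(T ^ i) x‖ ≤ ‖x‖ := by
  induction i with
  | zero => rfl
  | succ i ih =>
    rw [pow_succ', Module.End.mul_apply]
    exact (hT _).trans ih

variable {K M : Type*} [NormedField K] [SeminormedAddCommGroup M] [NormedSpace K M]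

lemma pow_mul_norm_powCoeff_le [IsUltrametricDist K] {b : ℕ → K} {r : ℝ} (hr : 0 ≤ r)
    (hb : ∀ j, j ≠ 0 → r * ‖b j‖ ≤ r ^ j) (i n : ℕ) : r ^ i * ‖powCoeff b i n‖ ≤ r ^ n := by
  have h_term (J : Fin i → ℕ) (hJ : J ∈ {J ∈ Fintype.piFinset fun _ : Fin i ↦ Finset.Icc 1 n |
      ∑ a, J a = n}) : r ^ i * ‖∏ a, b (J a)‖ ≤ r ^ n := by
    rw [Finset.mem_filter, Fintype.mem_piFinset] at hJ
    calc r ^ i * ‖∏ a, b (J a)‖ = ∏ a, r * ‖b (J a)‖ := by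
          rw [norm_prod, Finset.prod_mul_distrib, Fin.prod_const]
      _ ≤ ∏ a, r ^ J a := Finset.prod_le_prod (fun a _ ↦ by positivity)
          fun a _ ↦ hb _ (Nat.one_le_iff_ne_zero.mp (Finset.mem_Icc.mp (hJ.1 a)).1)
      _ = r ^ n := by rw [Finset.prod_pow_eq_pow_sum, hJ.2]
  rcases (pow_nonneg hr i).eq_or_lt with hri | hri
  · rw [← hri, zero_mul]
    positivity
  · rw [← le_div_iff₀' hri]
    exact IsUltrametricDist.norm_sum_le_of_forall_le_of_nonneg (by positivity) fun J hJ ↦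
      (le_div_iff₀' hri).mpr (h_term J hJ)

variable [IsUltrametricDist M]

lemma norm_compTerm_le [IsUltrametricDist K] {e b : ℕ → K} {T : Module.End K M} {r : ℝ} (hr : 0 ≤ r)
    (he : ∀ i, ‖e i‖ ≤ r ^ i) (hb : ∀ j, j ≠ 0 → r * ‖b j‖ ≤ r ^ j) (hT : ∀ x, ‖T x‖ ≤ ‖x‖)
    (x : ℕ → M) (n : ℕ) : ‖compTerm e b T x n‖ ≤ r ^ n * ‖x n‖ := by
  refine IsUltrametricDist.norm_sum_le_of_forall_le_of_nonneg (by positivity) fun i _ ↦ ?_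
  calc ‖(e i * powCoeff b i n) • (T ^ i) (x n)‖
      = ‖e i‖ * ‖powCoeff b i n‖ * ‖(T ^ i) (x n)‖ := by rw [norm_smul, norm_mul]
    _ ≤ r ^ i * ‖powCoeff b i n‖ * ‖x n‖ := by
        gcongr
        exacts [he i, norm_pow_apply_le hT i (x n)]
    _ ≤ r ^ n * ‖x n‖ := by gcongr; exact pow_mul_norm_powCoeff_le hr hb i n

variable [CompleteSpace M]

theorem exists_tendsto_sum_Icc_smul {b : ℕ → K} {r : ℝ} (hb : ∀ j, j ≠ 0 → ‖b j‖ ≤ r ^ j)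
    {x : ℕ → M} (hx : Tendsto (fun n ↦ r ^ n * ‖x n‖) atTop (nhds 0)) :
    ∃ A, Tendsto (fun m ↦ ∑ j ∈ Finset.Icc 1 m, b j • x j) atTop (nhds A) := by
  refine cauchySeq_tendsto_of_complete
    (NonarchimedeanAddGroup.cauchySeq_of_tendsto_sub_nhds_zero ?_)
  refine squeeze_zero_norm (fun m ↦ ?_) (hx.comp (tendsto_add_atTop_nat 1))
  rw [Finset.sum_Icc_succ_top (Nat.le_add_left 1 m), add_sub_cancel_left, norm_smul]
  exact mul_le_mul_of_nonneg_right (hb _ m.succ_ne_zero) (norm_nonneg _)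

theorem exists_tendsto_sum_smul_pow_apply [IsUltrametricDist K] {e b : ℕ → K}
    {T : Module.End K M} {r : ℝ} (hr : 0 ≤ r)
    (he : ∀ i, ‖e i‖ ≤ r ^ i) (hb : ∀ j, j ≠ 0 → r * ‖b j‖ ≤ r ^ j) (hT : ∀ x, ‖T x‖ ≤ ‖x‖)
    {x : ℕ → M} (hx : Tendsto (fun n ↦ r ^ n * ‖x n‖) atTop (nhds 0)) :
    ∃ B, Tendsto (fun m ↦ ∑ i ∈ Finset.range (m + 1), e i • (T ^ i)
        (∑ J ∈ (Fintype.piFinset fun _ : Fin i ↦ Finset.Icc 1 m) with ∑ a, J a ≤ m,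
          (∏ a, b (J a)) • x (∑ a, J a))) atTop (nhds B) := by
  simp only [sum_smul_pow_apply_eq_sum_compTerm]
  refine cauchySeq_tendsto_of_complete
    (NonarchimedeanAddGroup.cauchySeq_of_tendsto_sub_nhds_zero ?_)
  refine squeeze_zero_norm (fun m ↦ ?_) (hx.comp (tendsto_add_atTop_nat 1))
  rw [Finset.sum_range_succ _ (m + 1), add_sub_cancel_left]
  exact norm_compTerm_le hr he hb hT x (m + 1)

end Convergence

theorem stmt_3_general {p : ℕ} [Fact p.Prime] {M : Type*} [SeminormedAddCommGroup M]
    [NormedSpace ℚ_[p] M] [IsUltrametricDist M] [CompleteSpace M] {T : Module.End ℚ_[p] M}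
    (hT : ∀ x, ‖T x‖ ≤ ‖x‖) {u : ℚ_[p]} (hu : 1 ≤ ‖u‖) {x : ℕ → M}
    (hx : Tendsto (fun n ↦ expRadiusInv p ^ n * ‖x n‖) atTop (nhds 0)) :
    (∃ A, Tendsto (fun m : ℕ ↦ ∑ j ∈ Finset.Icc 1 m, ((-1 : ℚ_[p]) ^ (j - 1) / (j : ℚ_[p])) • x j)
      atTop (nhds A)) ∧
    (∃ B, Tendsto (fun m : ℕ ↦ ∑ i ∈ Finset.range (m + 1),
        ((1 : ℚ_[p]) / ((i.factorial : ℚ_[p]) * u ^ i)) • (T ^ i)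
          (∑ J ∈ (Fintype.piFinset fun _ : Fin i ↦ Finset.Icc 1 m) with ∑ a, J a ≤ m,
            (∏ a, ((-1 : ℚ_[p]) ^ (J a - 1) / (J a : ℚ_[p]))) • x (∑ a, J a)))
      atTop (nhds B)) := by
  have hr : 1 ≤ expRadiusInv p := one_le_expRadiusInv (Fact.out : p.Prime).one_le
  have h_log : ∀ j : ℕ, j ≠ 0 → expRadiusInv p * ‖(-1 : ℚ_[p]) ^ (j - 1) / (j : ℚ_[p])‖ ≤
      expRadiusInv p ^ j := fun _ hj ↦ expRadiusInv_mul_norm_log_coeff_le hj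
  exact ⟨exists_tendsto_sum_Icc_smul
      (fun j hj ↦ (le_mul_of_one_le_left (norm_nonneg _) hr).trans (h_log j hj)) hx,
    exists_tendsto_sum_smul_pow_apply (zero_le_one.trans hr) (norm_exp_coeff_le hu) h_log hT hx⟩

/-- Analytic core of the `p`-adic iteration of the Gauss–Manin connection
(Proposition 4.2): given a nonarchimedean complete normed `ℚ_p`-vector space `M`,
commuting operators `L` (a power of a partial Gauss–Manin connection) and `T`
(norm-nonincreasing, multiplication by the weight parameter), and `g ∈ M` with
`‖(L − id)^N g‖ ≤ C·p^{−N}` for all `N`, both the logarithm series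
`Σ_{j≥1} ((−1)^{j−1}/j)·(L − id)^j(g)` and the exponential double series `B_m`
defining `∇(σ)^{s_σ}(g)` converge in `M`. -/
theorem stmt_3 (p : ℕ) [Fact p.Prime] (hp3 : 3 ≤ p)
    {M : Type*} [NormedAddCommGroup M] [NormedSpace ℚ_[p] M] [CompleteSpace M]
    (hna : ∀ x y : M, ‖x + y‖ ≤ max ‖x‖ ‖y‖)
    (L T : Module.End ℚ_[p] M)
    (hT : ∀ x : M, ‖T x‖ ≤ ‖x‖)
    (hcomm : T * L = L * T)
    (f : ℕ) (hf : 1 ≤ f)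
    (g : M) (C : ℝ) (hC : 0 ≤ C)
    (hbound : ∀ N : ℕ, ‖((L - 1) ^ N) g‖ ≤ C * (p : ℝ) ^ (-(N : ℤ))) :
    (∃ A : M, Tendsto
        (fun m : ℕ => ∑ j ∈ Finset.Icc 1 m,
          (((-1 : ℚ_[p]) ^ (j - 1) / (j : ℚ_[p])) • ((L - 1) ^ j) g))
        atTop (nhds A)) ∧
    (∃ B : M, Tendsto
        (fun m : ℕ => ∑ i ∈ Finset.range (m + 1),
          ((1 : ℚ_[p]) / ((i.factorial : ℚ_[p]) * ((p : ℚ_[p]) ^ f - 1) ^ i)) •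
            (T ^ i)
              (∑ J ∈ (Fintype.piFinset fun _ : Fin i => Finset.Icc 1 m).filter
                  (fun J => ∑ a, J a ≤ m),
                (∏ a, ((-1 : ℚ_[p]) ^ (J a - 1) / (J a : ℚ_[p]))) •
                  ((L - 1) ^ (∑ a, J a)) g))
        atTop (nhds B)) := by
  have := IsUltrametricDist.isUltrametricDist_of_forall_norm_add_le_max_norm hna
  exact stmt_3_general hT (norm_prime_pow_sub_one (by lia)).ge
    (tendsto_expRadiusInv_pow_mul_norm hp3 hbound)
end

section
/- Let R be a commutative ring, let g ≥ 1 and d ≥ 1 be integers, and let u₁,…,u_g ∈ R. In the polynomial ring R[X₁,…,X_g], let S be the R-submodule spanned by all elements (u_j − I_j)·X^I·X_j, where j ranges over {1,…,g} and I ranges over multi-indices of total degree d − 1 (here I_j denotes the j-th entry of I, viewed in R via the canonical map from ℕ). Then for every multi-index I′ of total degree d, the element (∏_{j=1}^{g} ∏_{i=0}^{d−1} (u_j − i)) · X^{I′} lies in S. -/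
open MvPolynomial

/-!
If `X_j` divides `X^{I'}`, then `X^{I'} = X^I · X_j` with `I_j < d`, so that `(u_j − I_j)·X^{I'}` is
itself one of the spanning elements and `u_j − I_j` is one of the factors of the product.
-/

section

variable {R σ : Type*} [CommRing R]

/-- The image of the map `Gr^n 𝕎_k ⊗ Ω → Gr^{n+1} 𝕎_{k+2t_L}` induced by the Gauss–Manin connection,
for a weight with analytic exponents `u`: the basis element `∏ V_i^{I_i}` is encoded as the
monomial `X^I`, so that `X^I ⊗ dX_j` is sent to `(u_j − I_j)·X^I·X_j`. -/
noncomputable def connectionImage (u : σ → R) (n : ℕ) : Submodule R (MvPolynomial σ R) :=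
  Submodule.span R {f | ∃ (j : σ) (I : σ →₀ ℕ),
    I.degree = n ∧ f = C (u j - (I j : R)) * monomial I 1 * X j}

theorem C_mul_monomial_add_single_mem_connectionImage (u : σ → R) (I : σ →₀ ℕ) {j : σ} {a : R}
    (ha : u j - (I j : R) ∣ a) :
    C a * monomial (I + Finsupp.single j 1) 1 ∈ connectionImage u I.degree := by
  obtain ⟨c, rfl⟩ := ha
  have hgen : C (u j - (I j : R)) * monomial I 1 * X j ∈ connectionImage u I.degree :=
    Submodule.subset_span ⟨j, I, rfl, rfl⟩
  convert Submodule.smul_mem _ c hgen using 1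
  rw [monomial_add_single, pow_one, smul_eq_C_mul, C_mul]
  ring

theorem sub_natCast_dvd_prod_prod_range (u : σ → R) {s : Finset σ} {j : σ} (hj : j ∈ s)
    {i d : ℕ} (hi : i < d) :
    u j - (i : R) ∣ ∏ j ∈ s, ∏ i ∈ Finset.range d, (u j - (i : R)) :=
  (Finset.dvd_prod_of_mem (fun i : ℕ => u j - (i : R)) (Finset.mem_range.2 hi)).trans
    (Finset.dvd_prod_of_mem (fun j => ∏ i ∈ Finset.range d, (u j - (i : R))) hj)

theorem stmt_4_general (u : σ → R) {n : ℕ} {I' : σ →₀ ℕ} (hI' : I'.degree = n + 1)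
    {s : Finset σ} (hs : ∃ j ∈ s, I' j ≠ 0) :
    C (∏ j ∈ s, ∏ i ∈ Finset.range (n + 1), (u j - (i : R))) * monomial I' 1 ∈
      connectionImage u n := by
  obtain ⟨j, hjs, hj⟩ := hs
  obtain ⟨I, rfl⟩ : ∃ I, I' = I + Finsupp.single j 1 :=
    ⟨_, (Finsupp.sub_add_single_one_cancel hj).symm⟩
  obtain rfl : I.degree = n := by simpa using hI'
  have hlt : I j < I.degree + 1 := Nat.lt_succ_of_le (Finsupp.le_degree j I)
  exact C_mul_monomial_add_single_mem_connectionImage u I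
    (sub_natCast_dvd_prod_prod_range u hjs hlt)

end

/-- Key algebraic step behind the overconvergent projection (Lemma 6.19): in
`R[X₁,…,X_g]`, let `S` be the `R`-submodule spanned by the elements
`(u_j − I_j)·X^I·X_j` for `j ∈ {1,…,g}` and multi-indices `I` of total degree
`d − 1`. Then for every multi-index `I′` of total degree `d`, the element
`(∏_j ∏_{i=0}^{d−1} (u_j − i))·X^{I′}` lies in `S`. -/
theorem stmt_4 {R : Type*} [CommRing R] (g d : ℕ) (hg : 1 ≤ g) (hd : 1 ≤ d)
    (u : Fin g → R)
    (S : Set (MvPolynomial (Fin g) R))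
    (hS : S = {f | ∃ (j : Fin g) (I : Fin g →₀ ℕ),
      (I.sum fun _ n => n) = d - 1 ∧
      f = C (u j - (I j : R)) * monomial I 1 * X j})
    (I' : Fin g →₀ ℕ) (hI' : (I'.sum fun _ n => n) = d) :
    C (∏ j, ∏ i ∈ Finset.range d, (u j - (i : R))) * monomial I' 1 ∈
      Submodule.span R S := by
  obtain ⟨n, rfl⟩ := Nat.exists_eq_add_of_le' hd
  have hdeg : I'.degree = n + 1 := hI'
  obtain ⟨j, hj⟩ : ∃ j, I' j ≠ 0 :=
    Finsupp.ne_iff.mp (mt (Finsupp.degree_eq_zero_iff I').mpr (hdeg.trans_ne n.succ_ne_zero))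
  exact hS ▸ stmt_4_general u hdeg ⟨j, Finset.mem_univ j, hj⟩
end
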